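/- Fix 0 < λ < 1 and an integer m ≥ 1; define t₀ = (1−λ^m)/(1−λ), tₖ = λ·t_{k−1} + 1 for k ≥ 1, and αₖ = (tₖ − 1)/tₖ. Let ESP = (α, p) be the exponential smoothing model with these smoothing rates, and suppose Assumption A holds (i.e., αₖ > 1/2 for all k and 0 < p(0) ≤ p(1)). Then for any bit sequence x_{1:n} of length n ≥ 1 and any partition S of (0, n], ℓ(x_{1:n}; ESP) − ∑_{(a,b]∈S} h(x_{a+1:b}) ≤ |S|·[ log₂(n/p(0)) + (π·log₂ e)²/(6·log₂(1/λ)) + (n−1)·log₂(1/λ) ]. -/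

import Mathlib

open Finset Real

/-- The exponential smoothing model's prediction: `espP α p x k y` is the probability
assigned to bit `y` after observing `x 1, …, x k` (bits are `Bool`, `1 ↦ true`). -/
noncomputable def espP (α : ℕ → ℝ) (p : Bool → ℝ) (x : ℕ → Bool) : ℕ → Bool → ℝ
  | 0, y => p y
  | k + 1, y =>
      if y = x (k + 1) then α (k + 1) * espP α p x k y + (1 - α (k + 1))
      else α (k + 1) * espP α p x k y

/-- Ideal code length assigned by the model to the letters `x (a+1), …, x b`. -/
noncomputable def codeLen (α : ℕ → ℝ) (p : Bool → ℝ) (x : ℕ → Bool) (a b : ℕ) : ℝ :=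
  ∑ i ∈ Finset.Ico a b, -Real.logb 2 (espP α p x i (x (i + 1)))

/-- `beta α i = α 1 * ⋯ * α i`, with `beta α 0 = 1`. -/
noncomputable def beta (α : ℕ → ℝ) (i : ℕ) : ℝ := ∏ k ∈ Finset.Icc 1 i, α k

/-- Binary entropy function (base-2); `Real.logb 2 0 = 0` handles the `0 log 0 = 0` convention. -/
noncomputable def binEnt (q : ℝ) : ℝ := -q * Real.logb 2 q - (1 - q) * Real.logb 2 (1 - q)

/-- Empirical entropy of the subsequence `x (a+1), …, x b`. -/
noncomputable def empEnt (x : ℕ → Bool) (a b : ℕ) : ℝ :=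
  ((b : ℝ) - a) *
    binEnt ((((Finset.Icc (a + 1) b).filter (fun i => x i = true)).card : ℝ) / ((b : ℝ) - a))

/-- `S` is a partition of the integer interval `(0, n]` into segments `(a, b]`
(represented by pairs `(a, b)`): every point of `(0, n]` lies in exactly one segment. -/
def IsPartition (S : Finset (ℕ × ℕ)) (n : ℕ) : Prop :=
  (∀ s ∈ S, s.1 < s.2 ∧ s.2 ≤ n) ∧
    ∀ i, 1 ≤ i → i ≤ n → ∃! s, s ∈ S ∧ s.1 < i ∧ i ≤ s.2

/-!
On a segment with relative frequency `θ` of ones, the model is compared with the constant prediction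
`θ`, whose code length is the empirical entropy. A potential in the current prediction `u` of `true`
bounds the excess code length letter by letter. With `c = log (1 / αₖ)`, reading a letter moves
`u` to `w` with either `1 - w = αₖ (1 - u)` (letter `true`) or `w = αₖ u` (letter `false`), and

  excess + Φ(w) ≤ Φ(u) + c,   where Φ(u) = K(u) / c - log u - log (1 - u),

as soon as the function `K` satisfies `K(w) - K(u) ≤ c log (w / θ)` for upward moves and
`K(w) - K(u) ≤ c log ((1 - w) / (1 - θ))` for downward moves (`pot_step`). Integration shows that
both hold when `log ((1-θ)/(1-v)) / v ≤ K'(v) ≤ log (v/θ) / (1-v)`; such a `K'` exists because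
relative entropy is nonnegative, and choosing it as close to `0` as possible gives
`0 ≤ K ≤ ∫₀¹ -log (1-v) / v dv = π² / 6` (`pot_nonneg`, `pot_le`).

The rates increase to `lam`, so the factor `1 / c` changes from step to step, but since it is
increasing and `K ≤ π² / 6`, the terms `K / c` contribute at most `π² / (6 log (1 / lam))` in total
(`pot_segment`). The remaining terms are controlled by the products of the rates, for which
`αₖ = lam tₖ₋₁ / tₖ` gives the closed form `α₁ ⋯ αₖ = lam ^ k t₀ / tₖ`, and by `tₖ ≤ (k + 1) t₀`
(`segment_bound`). Constant segments, where `θ` is `0` or `1`, follow by letting `θ` tend to this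
value (`le_entropy_of_forall`).
-/

/-! ### A bounded potential -/

/-- The series `Li₂(1) = ∑ 1 / n²` dominates every partial dilogarithm integral. -/
lemma dilog_integral_le {a b : ℝ} (ha : 0 < a) (hab : a ≤ b) (hb : b < 1) :
    ∫ v in a..b, -Real.log (1 - v) / v ≤ π ^ 2 / 6 := by
  have hb0 : 0 < b := ha.trans_le hab
  have hmem : ∀ v, v ∈ Set.uIoc a b → 0 < v ∧ v ≤ b := fun v hv => by
    rw [Set.uIoc_of_le hab] at hv
    exact ⟨ha.trans hv.1, hv.2⟩
  have hsum : HasSum (fun k : ℕ => ∫ v in a..b, v ^ k / ((k : ℝ) + 1))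
      (∫ v in a..b, -Real.log (1 - v) / v) := by
    refine intervalIntegral.hasSum_integral_of_dominated_convergence (fun k _ => b ^ k)
      (fun k => by fun_prop) (fun k => .of_forall fun v hv => ?_)
      (.of_forall fun v _ => summable_geometric_of_lt_one hb0.le hb)
      intervalIntegrable_const (.of_forall fun v hv => ?_)
    · obtain ⟨h0, h1⟩ := hmem v hv
      rw [Real.norm_of_nonneg (by positivity)]
      refine (div_le_self (by positivity) ?_).trans (pow_le_pow_left₀ h0.le h1 k)
      have := Nat.cast_nonneg (α := ℝ) k
      linarith
    · obtain ⟨h0, h1⟩ := hmem v hv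
      have h := (Real.hasSum_pow_div_log_of_abs_lt_one (x := v)
        (by rw [abs_of_pos h0]; linarith)).div_const v
      have e : (fun k : ℕ => v ^ (k + 1) / ((k : ℝ) + 1) / v) = fun k : ℕ => v ^ k / ((k : ℝ) + 1) := by
        funext k
        rw [div_right_comm, pow_succ, mul_div_cancel_right₀ _ h0.ne']
      rwa [e] at h
  have hz : HasSum (fun k : ℕ => 1 / ((k : ℝ) + 1) ^ 2) (π ^ 2 / 6) := by
    have h := (hasSum_nat_add_iff' (f := fun n : ℕ => 1 / (n : ℝ) ^ 2) 1).mpr hasSum_zeta_two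
    simpa using h
  refine hasSum_le (fun k => ?_) hsum hz
  have hk : (0 : ℝ) < (k : ℝ) + 1 := by positivity
  rw [intervalIntegral.integral_div, integral_pow, div_div, ← sq]
  gcongr
  have h1 : b ^ (k + 1) ≤ 1 := pow_le_one₀ hb0.le hb.le
  have h2 : 0 ≤ a ^ (k + 1) := by positivity
  linarith

/-- The derivative of the potential `pot θ`. Its lower envelope `log ((1-θ)/(1-v)) / v` is what a
`false` bit requires and its upper envelope `log (v/θ) / (1-v)` what a `true` bit requires; between
the two, the value closest to `0` is taken so that the potential stays bounded by `π² / 6`. -/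
noncomputable def potDeriv (θ v : ℝ) : ℝ :=
  min ((Real.log v - Real.log θ) / (1 - v)) (max ((Real.log (1 - θ) - Real.log (1 - v)) / v) 0)

/-- The potential of a model that predicts `true` with probability `u`, when it competes against
the constant prediction `θ`. -/
noncomputable def pot (θ u : ℝ) : ℝ := ∫ v in θ..u, potDeriv θ v

lemma potDeriv_le (θ v : ℝ) : potDeriv θ v ≤ (Real.log v - Real.log θ) / (1 - v) :=
  min_le_left _ _

/-- The two envelopes are ordered because the relative entropy of the distributions `(v, 1 - v)`
and `(θ, 1 - θ)` is nonnegative. -/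
lemma le_potDeriv {θ v : ℝ} (hθ0 : 0 < θ) (hθ1 : θ < 1) (hv0 : 0 < v) (hv1 : v < 1) :
    (Real.log (1 - θ) - Real.log (1 - v)) / v ≤ potDeriv θ v := by
  refine le_min ?_ (le_max_left _ _)
  have h1v : 0 < 1 - v := by linarith
  have h1 : Real.log θ - Real.log v ≤ θ / v - 1 := by
    rw [← Real.log_div hθ0.ne' hv0.ne']
    exact Real.log_le_sub_one_of_pos (by positivity)
  have h2 : Real.log (1 - θ) - Real.log (1 - v) ≤ (1 - θ) / (1 - v) - 1 := by
    rw [← Real.log_div (by linarith) h1v.ne']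
    exact Real.log_le_sub_one_of_pos (div_pos (by linarith) h1v)
  rw [div_le_div_iff₀ hv0 h1v]
  have h3 := mul_le_mul_of_nonneg_right h1 hv0.le
  have h4 := mul_le_mul_of_nonneg_right h2 h1v.le
  have e1 : (θ / v - 1) * v = θ - v := by field_simp
  have e2 : ((1 - θ) / (1 - v) - 1) * (1 - v) = v - θ := by field_simp; ring
  rw [e1] at h3
  rw [e2] at h4
  linarith

lemma uIcc_sub_Ioo {a b : ℝ} (ha : a ∈ Set.Ioo (0 : ℝ) 1) (hb : b ∈ Set.Ioo (0 : ℝ) 1) :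
    Set.uIcc a b ⊆ Set.Ioo (0 : ℝ) 1 :=
  Set.OrdConnected.uIcc_subset Set.ordConnected_Ioo ha hb

lemma potDeriv_integrable (θ : ℝ) {a b : ℝ} (ha : a ∈ Set.Ioo (0 : ℝ) 1)
    (hb : b ∈ Set.Ioo (0 : ℝ) 1) :
    IntervalIntegrable (potDeriv θ) MeasureTheory.volume a b := by
  refine ContinuousOn.intervalIntegrable fun v hv => ?_
  obtain ⟨h0, h1⟩ := uIcc_sub_Ioo ha hb hv
  have h2 : 1 - v ≠ 0 := by linarith
  have h3 : v ≠ 0 := h0.ne'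
  refine ContinuousAt.continuousWithinAt ?_
  unfold potDeriv
  fun_prop (disch := assumption)

lemma pot_sub {θ u w : ℝ} (hθ : θ ∈ Set.Ioo (0 : ℝ) 1) (hu : u ∈ Set.Ioo (0 : ℝ) 1)
    (hw : w ∈ Set.Ioo (0 : ℝ) 1) : pot θ w - pot θ u = ∫ v in u..w, potDeriv θ v :=
  intervalIntegral.integral_interval_sub_left (potDeriv_integrable θ hθ hw)
    (potDeriv_integrable θ hθ hu)

lemma pot_nonneg {θ u : ℝ} (hθ : θ ∈ Set.Ioo (0 : ℝ) 1) (hu : u ∈ Set.Ioo (0 : ℝ) 1) :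
    0 ≤ pot θ u := by
  obtain ⟨hθ0, hθ1⟩ := hθ
  obtain ⟨hu0, hu1⟩ := hu
  unfold pot
  rcases le_total θ u with h | h
  · refine intervalIntegral.integral_nonneg h fun v hv => le_min ?_ (le_max_right _ _)
    have := Real.log_le_log hθ0 hv.1
    exact div_nonneg (by linarith) (by linarith [hv.2])
  · rw [intervalIntegral.integral_symm, ← intervalIntegral.integral_neg]
    refine intervalIntegral.integral_nonneg h fun v hv => neg_nonneg.2 ((min_le_left _ _).trans ?_)
    have := Real.log_le_log (hu0.trans_le hv.1) hv.2
    exact div_nonpos_of_nonpos_of_nonneg (by linarith) (by linarith [hv.2])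

lemma pot_le {θ u : ℝ} (hθ : θ ∈ Set.Ioo (0 : ℝ) 1) (hu : u ∈ Set.Ioo (0 : ℝ) 1) :
    pot θ u ≤ π ^ 2 / 6 := by
  have hint := potDeriv_integrable θ hθ hu
  obtain ⟨hθ0, hθ1⟩ := hθ
  obtain ⟨hu0, hu1⟩ := hu
  unfold pot
  rcases le_total θ u with h | h
  · refine le_trans (intervalIntegral.integral_mono_on h hint ?_ ?_)
      (dilog_integral_le hθ0 h hu1)
    · refine ContinuousOn.intervalIntegrable fun v hv => ?_
      obtain ⟨h0, h1⟩ := uIcc_sub_Ioo ⟨hθ0, hθ1⟩ ⟨hu0, hu1⟩ hv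
      have h2 : 1 - v ≠ 0 := by linarith
      have h3 : v ≠ 0 := h0.ne'
      refine ContinuousAt.continuousWithinAt ?_
      fun_prop (disch := assumption)
    · intro v hv
      have hv0 : 0 < v := hθ0.trans_le hv.1
      have h1 : Real.log (1 - θ) ≤ 0 := Real.log_nonpos (by linarith) (by linarith)
      have h2 : Real.log (1 - v) ≤ 0 := Real.log_nonpos (by linarith [hv.2]) (by linarith)
      refine (min_le_right _ _).trans (max_le ?_ (div_nonneg (by linarith) hv0.le))
      gcongr
      linarith
  · have hswap : ∫ v in u..θ, -Real.log v / (1 - v)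
        = ∫ v in (1 - θ)..(1 - u), -Real.log (1 - v) / v := by
      rw [← intervalIntegral.integral_comp_sub_left (fun v => -Real.log (1 - v) / v) 1]
      simp
    rw [intervalIntegral.integral_symm, ← intervalIntegral.integral_neg]
    refine le_trans (intervalIntegral.integral_mono_on h hint.symm.neg ?_ ?_)
      (hswap.trans_le (dilog_integral_le (by linarith) (by linarith) (by linarith)))
    · refine ContinuousOn.intervalIntegrable fun v hv => ?_
      obtain ⟨h0, h1⟩ := uIcc_sub_Ioo ⟨hu0, hu1⟩ ⟨hθ0, hθ1⟩ hv
      have h2 : 1 - v ≠ 0 := by linarith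
      have h3 : v ≠ 0 := h0.ne'
      refine ContinuousAt.continuousWithinAt ?_
      fun_prop (disch := assumption)
    · intro v hv
      have hv0 : 0 < v := hu0.trans_le hv.1
      have h1 : 0 < 1 - v := by linarith [hv.2]
      have h2 : Real.log θ ≤ 0 := Real.log_nonpos hθ0.le hθ1.le
      have h3 : Real.log v ≤ 0 := Real.log_nonpos hv0.le (by linarith)
      refine neg_le.1 (le_min ?_ (le_max_of_le_right ?_))
      · rw [← neg_div]
        gcongr
        linarith
      · exact neg_nonpos.2 (div_nonneg (by linarith) h1.le)

/-- Growth of the potential when the prediction of `true` rises from `u` to `w`. -/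
lemma pot_sub_le_of_le {θ u w : ℝ} (hθ : θ ∈ Set.Ioo (0 : ℝ) 1) (hu : u ∈ Set.Ioo (0 : ℝ) 1)
    (hw : w ∈ Set.Ioo (0 : ℝ) 1) (h : u ≤ w) :
    pot θ w - pot θ u
      ≤ (Real.log w - Real.log θ) * (Real.log (1 - u) - Real.log (1 - w)) := by
  have hval : ∫ v in u..w, (Real.log w - Real.log θ) * (1 / (1 - v))
      = (Real.log w - Real.log θ) * (Real.log (1 - u) - Real.log (1 - w)) := by
    rw [intervalIntegral.integral_const_mul,
      intervalIntegral.integral_comp_sub_left (fun v : ℝ => 1 / v) 1,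
      integral_one_div_of_pos (by linarith [hw.2]) (by linarith [hu.2]),
      Real.log_div (by linarith [hu.2]) (by linarith [hw.2])]
  rw [pot_sub hθ hu hw, ← hval]
  refine intervalIntegral.integral_mono_on h (potDeriv_integrable θ hu hw) ?_ fun v hv => ?_
  · refine ContinuousOn.intervalIntegrable fun v hv => ?_
    obtain ⟨h0, h1⟩ := uIcc_sub_Ioo hu hw hv
    have h2 : 1 - v ≠ 0 := by linarith
    refine ContinuousAt.continuousWithinAt ?_
    fun_prop (disch := assumption)
  · refine (potDeriv_le θ v).trans ?_
    rw [mul_one_div]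
    have h1 : 0 < 1 - v := by linarith [hv.2, hw.2]
    have := Real.log_le_log (hu.1.trans_le hv.1) hv.2
    gcongr

/-- Growth of the potential when the prediction of `true` falls from `u` to `w`. -/
lemma pot_sub_le_of_ge {θ u w : ℝ} (hθ : θ ∈ Set.Ioo (0 : ℝ) 1) (hu : u ∈ Set.Ioo (0 : ℝ) 1)
    (hw : w ∈ Set.Ioo (0 : ℝ) 1) (h : w ≤ u) :
    pot θ w - pot θ u
      ≤ (Real.log (1 - w) - Real.log (1 - θ)) * (Real.log u - Real.log w) := by
  have hval : ∫ v in w..u, (Real.log (1 - θ) - Real.log (1 - w)) * (1 / v)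
      = (Real.log (1 - θ) - Real.log (1 - w)) * (Real.log u - Real.log w) := by
    rw [intervalIntegral.integral_const_mul, integral_one_div_of_pos hw.1 hu.1,
      Real.log_div hu.1.ne' hw.1.ne']
  have hle : (Real.log (1 - θ) - Real.log (1 - w)) * (Real.log u - Real.log w)
      ≤ pot θ u - pot θ w := by
    rw [pot_sub hθ hw hu, ← hval]
    refine intervalIntegral.integral_mono_on h ?_ (potDeriv_integrable θ hw hu) fun v hv => ?_
    · refine ContinuousOn.intervalIntegrable fun v hv => ?_
      obtain ⟨h0, h1⟩ := uIcc_sub_Ioo hw hu hv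
      have h2 : v ≠ 0 := h0.ne'
      refine ContinuousAt.continuousWithinAt ?_
      fun_prop (disch := assumption)
    · have h0 : 0 < v := hw.1.trans_le hv.1
      have h1 : v < 1 := hv.2.trans_lt hu.2
      refine le_trans ?_ (le_potDeriv hθ.1 hθ.2 h0 h1)
      rw [mul_one_div]
      have := Real.log_le_log (show 0 < 1 - v by linarith) (show 1 - v ≤ 1 - w by linarith [hv.1])
      gcongr
  linarith

/-! ### The potential argument along the predictions of the model -/

section Model

variable {α : ℕ → ℝ} {p : Bool → ℝ} (x : ℕ → Bool)

lemma espP_add (hpsum : p false + p true = 1) (k : ℕ) :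
    espP α p x k false + espP α p x k true = 1 := by
  induction k with
  | zero => exact hpsum
  | succ k ih =>
    cases h : x (k + 1) <;> simp [espP, h] <;> linear_combination α (k + 1) * ih

lemma espP_pos (hα0 : ∀ k, 0 < α (k + 1)) (hα1 : ∀ k, α (k + 1) < 1)
    (hp : ∀ y, 0 < p y) (k : ℕ) (y : Bool) : 0 < espP α p x k y := by
  induction k with
  | zero => exact hp y
  | succ k ih =>
    have h := mul_pos (hα0 k) ih
    simp only [espP]
    split_ifs
    · linarith [hα1 k]
    · exact h

/-- No prediction decreases faster than by the smoothing rates, which are the ratios of `γ`. -/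
lemma le_espP (hα1 : ∀ k, α (k + 1) < 1) (hα0 : ∀ k, 0 < α (k + 1)) {γ : ℕ → ℝ} {c : ℝ}
    (h0 : ∀ y, c * γ 0 ≤ p y) (hγ : ∀ k, γ (k + 1) = α (k + 1) * γ k) (k : ℕ) (y : Bool) :
    c * γ k ≤ espP α p x k y := by
  induction k with
  | zero => exact h0 y
  | succ k ih =>
    have h := mul_le_mul_of_nonneg_left ih (hα0 k).le
    have e : c * γ (k + 1) = α (k + 1) * (c * γ k) := by rw [hγ]; ring
    rw [e]
    simp only [espP]
    split_ifs
    · linarith [hα1 k]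
    · exact h

/-- One step of the potential argument: with `c = log (1 / α)`, the excess code length of a letter
over the constant prediction `θ` is paid for by the potential `pot θ u / c - log u - log (1 - u)`
and an allowance of `c`. -/
lemma pot_step {θ : ℝ} (hθ : θ ∈ Set.Ioo (0 : ℝ) 1) (hpsum : p false + p true = 1)
    (hp : ∀ y, 0 < p y) (hα0 : ∀ k, 0 < α (k + 1)) (hα1 : ∀ k, α (k + 1) < 1) (k : ℕ) :
    -Real.log (espP α p x k (x (k + 1)))
        + (if x (k + 1) = true then Real.log θ else Real.log (1 - θ))
        + (pot θ (espP α p x (k + 1) true) / (-Real.log (α (k + 1)))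
          - Real.log (espP α p x (k + 1) true) - Real.log (espP α p x (k + 1) false))
      ≤ pot θ (espP α p x k true) / (-Real.log (α (k + 1)))
          - Real.log (espP α p x k true) - Real.log (espP α p x k false)
        + -Real.log (α (k + 1)) := by
  have hpos := espP_pos x hα0 hα1 hp
  have hadd := espP_add (α := α) x hpsum
  have hmem : ∀ k, espP α p x k true ∈ Set.Ioo (0 : ℝ) 1 := fun k =>
    ⟨hpos k true, by linarith [hpos k false, hadd k]⟩
  have hf : ∀ k, espP α p x k false = 1 - espP α p x k true := fun k => by linarith [hadd k]
  have hc : 0 < -Real.log (α (k + 1)) := neg_pos.2 (Real.log_neg (hα0 k) (hα1 k))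
  have hu := hmem k
  have hw := hmem (k + 1)
  have hfk := hf k
  have hfk1 := hf (k + 1)
  cases hx : x (k + 1) with
  | true =>
    have hs : espP α p x (k + 1) false = α (k + 1) * espP α p x k false := by simp [espP, hx]
    have hlog := congrArg Real.log hs
    rw [Real.log_mul (hα0 k).ne' (hpos k false).ne'] at hlog
    have hle : espP α p x k true ≤ espP α p x (k + 1) true := by
      have := mul_le_mul_of_nonneg_right (hα1 k).le (hpos k false).le
      linarith
    have h := pot_sub_le_of_le hθ hu hw hle
    rw [← hfk, ← hfk1, hlog] at h
    have h' : pot θ (espP α p x (k + 1) true) / (-Real.log (α (k + 1)))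
        - pot θ (espP α p x k true) / (-Real.log (α (k + 1)))
        ≤ Real.log (espP α p x (k + 1) true) - Real.log θ := by
      rw [← sub_div, div_le_iff₀ hc]
      linarith
    simp only [if_true]
    linarith
  | false =>
    have hs : espP α p x (k + 1) true = α (k + 1) * espP α p x k true := by simp [espP, hx]
    have hlog := congrArg Real.log hs
    rw [Real.log_mul (hα0 k).ne' (hpos k true).ne'] at hlog
    have hle : espP α p x (k + 1) true ≤ espP α p x k true := by
      have := mul_le_mul_of_nonneg_right (hα1 k).le (hpos k true).le
      linarith
    have h := pot_sub_le_of_ge hθ hu hw hle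
    rw [← hfk1, hlog] at h
    have h' : pot θ (espP α p x (k + 1) true) / (-Real.log (α (k + 1)))
        - pot θ (espP α p x k true) / (-Real.log (α (k + 1)))
        ≤ Real.log (espP α p x (k + 1) false) - Real.log (1 - θ) := by
      rw [← sub_div, div_le_iff₀ hc]
      linarith
    simp only [Bool.false_eq_true, if_false]
    linarith

/-- Summing `pot_step` over a segment. The scale `1 / log (1 / α k)` of the potential grows with
`k`, but as the potential never exceeds `π² / 6` the total contribution is bounded by the last
scale. -/
lemma pot_segment {θ : ℝ} (hθ : θ ∈ Set.Ioo (0 : ℝ) 1) (hpsum : p false + p true = 1)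
    (hp : ∀ y, 0 < p y) (hα0 : ∀ k, 0 < α (k + 1)) (hα1 : ∀ k, α (k + 1) < 1)
    (hmono : ∀ k, α (k + 1) ≤ α (k + 2)) {a b : ℕ} (hab : a ≤ b) :
    ∑ k ∈ Finset.Ico a b, (-Real.log (espP α p x k (x (k + 1)))
        + (if x (k + 1) = true then Real.log θ else Real.log (1 - θ)))
        + (pot θ (espP α p x b true) / (-Real.log (α (b + 1)))
          - Real.log (espP α p x b true) - Real.log (espP α p x b false))
      ≤ (π ^ 2 / 6) / (-Real.log (α (b + 1)))
          - Real.log (espP α p x a true) - Real.log (espP α p x a false)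
        + ∑ k ∈ Finset.Ico a b, -Real.log (α (k + 1)) := by
  have hpos := espP_pos x hα0 hα1 hp
  have hadd := espP_add (α := α) x hpsum
  have hmem : ∀ k, espP α p x k true ∈ Set.Ioo (0 : ℝ) 1 := fun k =>
    ⟨hpos k true, by linarith [hpos k false, hadd k]⟩
  have hc : ∀ k, 0 < -Real.log (α (k + 1)) := fun k =>
    neg_pos.2 (Real.log_neg (hα0 k) (hα1 k))
  induction b, hab using Nat.le_induction with
  | base =>
    have := div_le_div_of_nonneg_right (pot_le hθ (hmem a)) (hc a).le
    simp only [Finset.Ico_self, Finset.sum_empty]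
    linarith
  | succ b hab ih =>
    rw [Finset.sum_Ico_succ_top hab, Finset.sum_Ico_succ_top hab]
    have hstep := pot_step x hθ hpsum hp hα0 hα1 b
    have hK := pot_le hθ (hmem (b + 1))
    have hscale : 1 / (-Real.log (α (b + 1))) ≤ 1 / (-Real.log (α (b + 1 + 1))) :=
      one_div_le_one_div_of_le (hc (b + 1)) (neg_le_neg (Real.log_le_log (hα0 b) (hmono b)))
    have hgrow := mul_le_mul_of_nonneg_left hscale (sub_nonneg.2 hK)
    simp only [mul_one_div, sub_div] at hgrow
    linarith

/-- For `A = log θ` and `B = log (1 - θ)` this is the log-probability of `x (a+1), …, x b` under the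
constant prediction `θ`. -/
lemma sum_const_pred {a b : ℕ} (hab : a ≤ b) (A B : ℝ) :
    ∑ k ∈ Finset.Ico a b, (if x (k + 1) = true then A else B)
      = (((Finset.Icc (a + 1) b).filter (fun i => x i = true)).card : ℝ) * A
        + ((b : ℝ) - a - ((Finset.Icc (a + 1) b).filter (fun i => x i = true)).card) * B := by
  induction b, hab using Nat.le_induction with
  | base => simp
  | succ b hab ih =>
    rw [Finset.sum_Ico_succ_top hab, ih, ← Finset.insert_Icc_right_eq_Icc_add_one (by omega),
      Finset.filter_insert]
    split_ifs with h
    · rw [Finset.card_insert_of_notMem (by simp)]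
      push_cast
      ring
    · push_cast
      ring

end Model

/-! ### Empirical entropy as an infimum over constant predictions -/

lemma binEnt_zero : binEnt 0 = 0 := by simp [binEnt]

lemma binEnt_one : binEnt 1 = 0 := by simp [binEnt]

/-- If a quantity `X` does not exceed the cost of `k` ones and `N - k` zeros under every
nondegenerate constant prediction, up to `R`, then it does not exceed the empirical entropy, up
to `R`. For a constant sequence the optimal prediction is degenerate and is reached as a limit. -/
lemma le_entropy_of_forall {X R N k : ℝ} (hN : 0 < N) (hk0 : 0 ≤ k) (hkN : k ≤ N)
    (h : ∀ θ ∈ Set.Ioo (0 : ℝ) 1, X + (k * Real.log θ + (N - k) * Real.log (1 - θ)) ≤ R) :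
    X ≤ N * binEnt (k / N) * Real.log 2 + R := by
  rcases hk0.eq_or_lt with h0 | h0
  · subst h0
    rw [zero_div, binEnt_zero]
    have hlim : Filter.Tendsto
        (fun θ : ℝ => X + (0 * Real.log θ + (N - 0) * Real.log (1 - θ)))
        (nhdsWithin 0 (Set.Ioi 0)) (nhds (X + (0 * 0 + (N - 0) * Real.log (1 - 0)))) := by
      simp only [zero_mul]
      refine Filter.Tendsto.mono_left (ContinuousAt.tendsto (f := fun θ : ℝ =>
        X + (0 + (N - 0) * Real.log (1 - θ))) ?_) nhdsWithin_le_nhds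
      have : (1 - (0 : ℝ)) ≠ 0 := by norm_num
      fun_prop (disch := assumption)
    have := le_of_tendsto hlim (Filter.mem_of_superset
      (Ioo_mem_nhdsGT (zero_lt_one' ℝ)) fun θ hθ => h θ hθ)
    simpa using this
  · rcases hkN.eq_or_lt with h1 | h1
    · subst h1
      rw [div_self hN.ne', binEnt_one]
      have hlim : Filter.Tendsto
          (fun θ : ℝ => X + (k * Real.log θ + (k - k) * Real.log (1 - θ)))
          (nhdsWithin 1 (Set.Iio 1)) (nhds (X + (k * Real.log 1 + (k - k) * 0))) := by
        simp only [sub_self, zero_mul]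
        refine Filter.Tendsto.mono_left (ContinuousAt.tendsto (f := fun θ : ℝ =>
          X + (k * Real.log θ + 0)) ?_) nhdsWithin_le_nhds
        fun_prop (disch := norm_num)
      have := le_of_tendsto hlim (Filter.mem_of_superset
        (Ioo_mem_nhdsLT (zero_lt_one' ℝ)) fun θ hθ => h θ hθ)
      simpa using this
    · have h2 := h (k / N) ⟨by positivity, (div_lt_one hN).2 h1⟩
      have hl : Real.log 2 ≠ 0 := (Real.log_pos one_lt_two).ne'
      have e : N * binEnt (k / N) * Real.log 2
          = -(k * Real.log (k / N) + (N - k) * Real.log (1 - k / N)) := by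
        unfold binEnt Real.logb
        field_simp
        ring
      linarith

/-! ### The redundancy of a segment and of a partition -/

/-- The redundancy on a single segment `(a, b]`, in natural logarithms. The initial potential costs
`log 2 + log (1 / (beta α a * p false))`, the allowances cost `log (beta α a / beta α b)`, and the final value of
`-log u - log (1 - u)` gives back `2 * log 2`, of which `log 2` pays for the last rate
`α b > 1 / 2`; this leaves `log (1 / (beta α (b - 1) * p false))`. For these rates,
`beta α k = γ k / γ 0` with `γ k = lam ^ k / t k`. -/
lemma segment_bound {lam : ℝ} (hl0 : 0 < lam) (hl1 : lam < 1) {m : ℕ} (hm : 1 ≤ m)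
    {t : ℕ → ℝ} (ht0 : t 0 = (1 - lam ^ m) / (1 - lam))
    (htk : ∀ k, t (k + 1) = lam * t k + 1)
    {α : ℕ → ℝ} (hα : ∀ k, α k = (t k - 1) / t k)
    (hA : ∀ k, 1 ≤ k → 1 / 2 < α k ∧ α k < 1)
    {p : Bool → ℝ} (hp0 : 0 < p false) (hple : p false ≤ p true)
    (hpsum : p false + p true = 1)
    (x : ℕ → Bool) {a b n : ℕ} (hab : a < b) (hbn : b ≤ n) :
    ∑ i ∈ Finset.Ico a b, -Real.log (espP α p x i (x (i + 1))) ≤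
      empEnt x a b * Real.log 2 +
        (Real.log n - Real.log (p false) + π ^ 2 / 6 / Real.log (1 / lam)
          + ((n : ℝ) - 1) * Real.log (1 / lam)) := by
  have h1l : 0 < 1 - lam := by linarith
  have hlm : lam ^ m ≤ lam := pow_le_of_le_one hl0.le hl1.le (by omega)
  have hlm0 : 0 < lam ^ m := by positivity
  have ht0' : t 0 * (1 - lam) = 1 - lam ^ m := by rw [ht0, div_mul_cancel₀ _ h1l.ne']
  have ht01 : 1 ≤ t 0 := by
    rw [ht0, le_div_iff₀ h1l]
    linarith
  have htmono : ∀ k, t k ≤ t (k + 1) := by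
    intro k
    induction k with
    | zero => rw [htk]; linarith
    | succ k ih =>
      have := mul_le_mul_of_nonneg_left ih hl0.le
      linarith [htk k, htk (k + 1)]
  have htpos : ∀ k, 0 < t k := fun k =>
    lt_of_lt_of_le (by linarith) (monotone_nat_of_le_succ htmono (Nat.zero_le k))
  have htlin : ∀ k : ℕ, t k ≤ ((k : ℝ) + 1) * t 0 := by
    intro k
    induction k with
    | zero => simp
    | succ k ih =>
      have := mul_le_mul_of_nonneg_right hl1.le (htpos k).le
      rw [htk]
      push_cast
      linarith
  have hαt : ∀ k, α (k + 1) = lam * t k / t (k + 1) := fun k => by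
    rw [hα, htk]
    ring
  have hα1 : ∀ k, α (k + 1) < 1 := fun k => (hA (k + 1) (by omega)).2
  have hαh : ∀ k, 1 / 2 < α (k + 1) := fun k => (hA (k + 1) (by omega)).1
  have hα0 : ∀ k, 0 < α (k + 1) := fun k => by linarith [hαh k]
  have hmono : ∀ k, α (k + 1) ≤ α (k + 2) := fun k => by
    rw [hα, hα, sub_div, sub_div, div_self (htpos _).ne', div_self (htpos _).ne']
    have := one_div_le_one_div_of_le (htpos (k + 1)) (htmono (k + 1))
    linarith
  have hαl : ∀ k, α (k + 1) ≤ lam := fun k => by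
    rw [hαt, div_le_iff₀ (htpos _)]
    exact mul_le_mul_of_nonneg_left (htmono k) hl0.le
  set γ : ℕ → ℝ := fun k => lam ^ k / t k with hγdef
  have hγpos : ∀ k, 0 < γ k := fun k => div_pos (by positivity) (htpos k)
  have hγ : ∀ k, γ (k + 1) = α (k + 1) * γ k := fun k => by
    have h1 := (htpos k).ne'
    have h2 := (htpos (k + 1)).ne'
    simp only [hγdef, hαt]
    field_simp
    ring
  have hlogγ : ∀ k, -Real.log (α (k + 1)) = Real.log (γ k) - Real.log (γ (k + 1)) := fun k => by
    rw [hγ, Real.log_mul (hα0 k).ne' (hγpos k).ne']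
    ring
  have hp : ∀ y, 0 < p y := fun y => by cases y <;> linarith
  have hγ0 : ∀ y, p false * t 0 * γ 0 ≤ p y := fun y => by
    have h0 := (htpos 0).ne'
    have e : p false * t 0 * γ 0 = p false := by
      simp only [hγdef]
      field_simp
    rw [e]
    cases y <;> linarith
  have hpos := espP_pos x hα0 hα1 hp
  have hadd := espP_add (α := α) x hpsum
  have hlow := le_espP x hα1 hα0 hγ0 hγ
  have hN : (0 : ℝ) < (b : ℝ) - a := sub_pos.2 (by exact_mod_cast hab)
  set K := ((Finset.Icc (a + 1) b).filter (fun i => x i = true)).card with hK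
  have hKN : (K : ℝ) ≤ (b : ℝ) - a := by
    have h1 : K ≤ b - a := by
      refine (Finset.card_filter_le _ _).trans ?_
      rw [Nat.card_Icc]
      omega
    rw [← Nat.cast_sub hab.le]
    exact_mod_cast h1
  have hlog2 : 0 < Real.log 2 := Real.log_pos one_lt_two
  -- One of the two predictions is at least `1 / 2`, the other at least `beta α a * p false`.
  have hstart : -Real.log (espP α p x a true) - Real.log (espP α p x a false)
      ≤ Real.log 2 - (Real.log (p false) + Real.log (t 0) + Real.log (γ a)) := by
    have hq : 0 < p false * t 0 * γ a := mul_pos (mul_pos hp0 (htpos 0)) (hγpos a)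
    rw [← Real.log_mul hp0.ne' (htpos 0).ne', ← Real.log_mul (mul_pos hp0 (htpos 0)).ne'
      (hγpos a).ne']
    have hT := Real.log_le_log hq (hlow a true)
    have hF := Real.log_le_log hq (hlow a false)
    have e : Real.log (1 / 2) = -Real.log 2 := by rw [one_div, Real.log_inv]
    rcases le_total (espP α p x a true) (1 / 2) with h | h
    · have := Real.log_le_log (by norm_num) (show 1 / 2 ≤ espP α p x a false by linarith [hadd a])
      linarith
    · have := Real.log_le_log (by norm_num) h
      linarith
  have hend : Real.log (espP α p x b true) + Real.log (espP α p x b false)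
      ≤ -(2 * Real.log 2) := by
    rw [← Real.log_mul (hpos b true).ne' (hpos b false).ne']
    have h4 : espP α p x b true * espP α p x b false ≤ ((2 : ℝ) ^ 2)⁻¹ := by
      have := hadd b
      nlinarith [sq_nonneg (espP α p x b true - espP α p x b false)]
    have h5 := Real.log_le_log (mul_pos (hpos b true) (hpos b false)) h4
    rw [Real.log_inv, Real.log_pow] at h5
    exact_mod_cast h5
  have htel : ∑ k ∈ Finset.Ico a b, -Real.log (α (k + 1)) = Real.log (γ a) - Real.log (γ b) := by
    rw [Finset.sum_congr rfl fun k _ => hlogγ k]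
    have h := Finset.sum_Ico_sub (fun k => -Real.log (γ k)) hab.le
    have e : ∀ k, Real.log (γ k) - Real.log (γ (k + 1))
        = -Real.log (γ (k + 1)) - -Real.log (γ k) := fun k => by ring
    simp only [e, h]
    ring
  have hlast : -Real.log (γ b) ≤ Real.log 2 + ((n : ℝ) - 1) * Real.log (1 / lam)
      + Real.log n + Real.log (t 0) := by
    obtain ⟨d, rfl⟩ : ∃ d, b = d + 1 := ⟨b - 1, by omega⟩
    have hdn : (d : ℝ) + 1 ≤ n := by exact_mod_cast hbn
    have hn0 : (0 : ℝ) < n := by linarith [Nat.cast_nonneg (α := ℝ) d]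
    have h1 := Real.log_le_log (by norm_num) (hαh d).le
    have h2 : Real.log (1 / 2) = -Real.log 2 := by rw [one_div, Real.log_inv]
    have h3 : Real.log (γ d) = d * Real.log lam - Real.log (t d) := by
      simp only [hγdef]
      rw [Real.log_div (by positivity) (htpos d).ne', Real.log_pow]
    have h4 : Real.log (t d) ≤ Real.log n + Real.log (t 0) := by
      rw [← Real.log_mul hn0.ne' (htpos 0).ne']
      exact Real.log_le_log (htpos d)
        ((htlin d).trans (mul_le_mul_of_nonneg_right hdn (htpos 0).le))
    have h5 : Real.log (1 / lam) = -Real.log lam := by rw [one_div, Real.log_inv]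
    have h6 : (d : ℝ) * Real.log (1 / lam) ≤ ((n : ℝ) - 1) * Real.log (1 / lam) :=
      mul_le_mul_of_nonneg_right (by linarith) (Real.log_nonneg (one_le_one_div hl0 hl1.le))
    have h7 := hlogγ d
    rw [h5] at h6 ⊢
    linarith
  refine le_entropy_of_forall (k := K) hN (Nat.cast_nonneg _) hKN fun θ hθ => ?_
  have hmain := pot_segment x hθ hpsum hp hα0 hα1 hmono hab.le
  have hKpos : 0 ≤ pot θ (espP α p x b true) / (-Real.log (α (b + 1))) :=
    div_nonneg (pot_nonneg hθ ⟨hpos b true, by linarith [hpos b false, hadd b]⟩)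
      (neg_pos.2 (Real.log_neg (hα0 b) (hα1 b))).le
  have hscale : (π ^ 2 / 6) / (-Real.log (α (b + 1))) ≤ π ^ 2 / 6 / Real.log (1 / lam) := by
    refine div_le_div_of_nonneg_left (by positivity) (Real.log_pos (one_lt_one_div hl0 hl1)) ?_
    rw [one_div, Real.log_inv]
    exact neg_le_neg (Real.log_le_log (hα0 b) (hαl b))
  rw [Finset.sum_add_distrib, sum_const_pred x hab.le, ← hK, htel] at hmain
  linarith

theorem stmt19 (lam : ℝ) (hl0 : 0 < lam) (hl1 : lam < 1) (m : ℕ) (hm : 1 ≤ m)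
    (t : ℕ → ℝ) (ht0 : t 0 = (1 - lam ^ m) / (1 - lam))
    (htk : ∀ k, t (k + 1) = lam * t k + 1)
    (α : ℕ → ℝ) (hα : ∀ k, α k = (t k - 1) / t k)
    (hA : ∀ k, 1 ≤ k → 1 / 2 < α k ∧ α k < 1)
    (p : Bool → ℝ) (hp0 : 0 < p false) (hple : p false ≤ p true)
    (hpsum : p false + p true = 1)
    (x : ℕ → Bool) (n : ℕ) (hn : 1 ≤ n)
    (S : Finset (ℕ × ℕ)) (hS : IsPartition S n) :
    codeLen α p x 0 n - ∑ s ∈ S, empEnt x s.1 s.2 ≤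
      (S.card : ℝ) *
        (Real.logb 2 ((n : ℝ) / p false) +
          (π * Real.logb 2 (Real.exp 1)) ^ 2 / (6 * Real.logb 2 (1 / lam)) +
            ((n : ℝ) - 1) * Real.logb 2 (1 / lam)) := by
  have hmem : ∀ s ∈ S, s.1 < s.2 ∧ s.2 ≤ n := hS.1
  have hlog2 : 0 < Real.log 2 := Real.log_pos one_lt_two
  have hc : 0 < Real.log (1 / lam) := Real.log_pos (one_lt_one_div hl0 hl1)
  have hn0 : (0 : ℝ) < n := by exact_mod_cast hn
  have hsplit : codeLen α p x 0 n = ∑ s ∈ S, codeLen α p x s.1 s.2 := by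
    have hU : Finset.Ico 0 n = S.biUnion fun s => Finset.Ico s.1 s.2 := by
      ext i
      simp only [Finset.mem_Ico, Finset.mem_biUnion, zero_le, true_and]
      constructor
      · intro hi
        obtain ⟨s, ⟨hsS, h1, h2⟩, -⟩ := hS.2 (i + 1) (by omega) (by omega)
        exact ⟨s, hsS, by omega, by omega⟩
      · rintro ⟨s, hsS, h1, h2⟩
        have := hmem s hsS
        omega
    unfold codeLen
    rw [hU, Finset.sum_biUnion]
    intro s hs s' hs' hne
    refine Finset.disjoint_left.2 fun i hi hi' => hne ?_
    simp only [Finset.mem_Ico] at hi hi'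
    have := hmem s hs
    exact (hS.2 (i + 1) (by omega) (by omega)).unique ⟨hs, by omega, by omega⟩
      ⟨hs', by omega, by omega⟩
  rw [hsplit, ← Finset.sum_sub_distrib, ← nsmul_eq_mul]
  refine Finset.sum_le_card_nsmul _ _ _ fun s hs => ?_
  obtain ⟨hab, hbn⟩ := hmem s hs
  have hseg := segment_bound hl0 hl1 hm ht0 htk hα hA hp0 hple hpsum x hab hbn
  have hcode : codeLen α p x s.1 s.2
      = (∑ i ∈ Finset.Ico s.1 s.2, -Real.log (espP α p x i (x (i + 1)))) / Real.log 2 := by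
    rw [codeLen, Finset.sum_div]
    exact Finset.sum_congr rfl fun i _ => by rw [Real.logb, neg_div]
  have hR : (Real.log n - Real.log (p false) + π ^ 2 / 6 / Real.log (1 / lam)
        + ((n : ℝ) - 1) * Real.log (1 / lam)) / Real.log 2
      = Real.logb 2 ((n : ℝ) / p false) +
          (π * Real.logb 2 (Real.exp 1)) ^ 2 / (6 * Real.logb 2 (1 / lam)) +
            ((n : ℝ) - 1) * Real.logb 2 (1 / lam) := by
    simp only [Real.logb]
    rw [Real.log_div hn0.ne' hp0.ne', Real.log_exp]
    field_simp
  rw [← hR, hcode, sub_le_iff_le_add, div_le_iff₀ hlog2, add_mul, div_mul_cancel₀ _ hlog2.ne']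
  linarith
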